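/- Let a, b, c be pairwise distinct elements of ℂ ∖ {0,1}. Let A = ℂ[x,y₁,y₂,z₁,z₂]/(y₁³ + y₂³ + x(x−1)(x−a)(x−b)(x−c), 1 + z₁³ + z₂³) be the coordinate ring of the product W₀ × F₀ of the affine surface W₀: y₁³ + y₂³ + x(x−1)(x−a)(x−b)(x−c) = 0 and the affine Fermat cubic F₀: 1 + z₁³ + z₂³ = 0, let K = Frac(A), and let σ be the order-3 ℂ-algebra automorphism of K determined by σ(y₁) = ω·y₁, σ(y₂) = ω·y₂, σ(z₁) = ω²·z₁, σ(z₂) = ω²·z₂ (fixing x) — the diagonal G = ℤ/3ℤ action. Then the fixed field K^σ is isomorphic as a ℂ-algebra to the function field Frac(ℂ[x₁,x₂,x₃,y]/(y³ − x₁x₂x₃(1+x₁+x₂+x₃)(1+a·x₁+b·x₂+c·x₃))). In other words, Rohde's singular Calabi–Yau threefold X' = (W × F)/G is birationally equivalent to the cyclic triple cover X of ℙ³ branched along the six hyperplanes X₀=0, X₁=0, X₂=0, X₃=0, X₀+X₁+X₂+X₃=0, X₀+aX₁+bX₂+cX₃=0. -/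

import Mathlib

/-!
Formalization conventions.

* The function field of an affine variety whose coordinate ring `ℂ[x₁,…,xₙ]/I` is an
  integral domain is formalized as `FractionRing` of that coordinate ring (for the total
  rings of fractions of the rings appearing here this is the function field).
* Two such varieties are birationally equivalent iff their function fields are
  isomorphic as `ℂ`-algebras.
-/

noncomputable section
open MvPolynomial

/-- `ω = exp(2πi/3) ∈ ℂ`, a fixed primitive cube root of unity. -/
def ω : ℂ := Complex.exp (2 * Real.pi * Complex.I / 3)

/-- Coordinate ring of the affine hypersurface `f = 0` in `ℂⁿ`. -/
abbrev HSurf {n : ℕ} (f : MvPolynomial (Fin n) ℂ) : Type :=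
  MvPolynomial (Fin n) ℂ ⧸ Ideal.span {f}

/-- Coordinate ring of the affine variety `f = g = 0` in `ℂⁿ`. -/
abbrev HSurf2 {n : ℕ} (f g : MvPolynomial (Fin n) ℂ) : Type :=
  MvPolynomial (Fin n) ℂ ⧸ Ideal.span {f, g}

/-- The image of a polynomial `p` in the function field of the hypersurface `f = 0`. -/
def cls {n : ℕ} (f : MvPolynomial (Fin n) ℂ) (p : MvPolynomial (Fin n) ℂ) :
    FractionRing (HSurf f) :=
  algebraMap (HSurf f) (FractionRing (HSurf f)) (Ideal.Quotient.mk _ p)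

/-- The image of a polynomial `p` in the function field of the variety `f = g = 0`. -/
def cls2 {n : ℕ} (f g : MvPolynomial (Fin n) ℂ) (p : MvPolynomial (Fin n) ℂ) :
    FractionRing (HSurf2 f g) :=
  algebraMap (HSurf2 f g) (FractionRing (HSurf2 f g)) (Ideal.Quotient.mk _ p)

/-- `x(x−1)(x−a)(x−b)(x−c)` in the coordinates of `W₀ × F₀`
(`x = X 0`, `y₁ = X 1`, `y₂ = X 2`, `z₁ = X 3`, `z₂ = X 4`). -/
def q5 (a b c : ℂ) : MvPolynomial (Fin 5) ℂ :=
  X 0 * (X 0 - 1) * (X 0 - C a) * (X 0 - C b) * (X 0 - C c)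

/-- Defining polynomial of the affine surface `W₀ : y₁³ + y₂³ + x(x−1)(x−a)(x−b)(x−c) = 0`,
as an equation in `ℂ⁵`. -/
def pW₀5 (a b c : ℂ) : MvPolynomial (Fin 5) ℂ := X 1 ^ 3 + X 2 ^ 3 + q5 a b c

/-- Defining polynomial of the affine Fermat cubic `F₀ : 1 + z₁³ + z₂³ = 0`, as an
equation in `ℂ⁵`. -/
def pF₀5 : MvPolynomial (Fin 5) ℂ := 1 + X 3 ^ 3 + X 4 ^ 3

/-- Defining polynomial of the affine hypersurface
`y³ = x₁x₂x₃(1+x₁+x₂+x₃)(1+a·x₁+b·x₂+c·x₃)` in `ℂ⁴`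
(variables: `x₁ = X 0`, `x₂ = X 1`, `x₃ = X 2`, `y = X 3`), an affine model of the cyclic
triple cover `X` of `ℙ³` branched along the six hyperplanes
`X₀=0, X₁=0, X₂=0, X₃=0, X₀+X₁+X₂+X₃=0, X₀+aX₁+bX₂+cX₃=0`. -/
def pX₁ (a b c : ℂ) : MvPolynomial (Fin 4) ℂ :=
  X 3 ^ 3 - X 0 * X 1 * X 2 * (1 + X 0 + X 1 + X 2) * (1 + C a * X 0 + C b * X 1 + C c * X 2)

/-!
The planes `a x₁ + b x₂ + c x₃ = x (x₁ + x₂ + x₃)` of `ℙ³` form a pencil containing the point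
`[1 : 0 : 0 : 0]` in its axis. On a plane of this pencil the six branch planes cut out two triples
of concurrent lines, so the triple cover restricts to the quotient by `ℤ/3ℤ` of a product of two
cubics, one for each triple: `P₀ + P₁ + P₂ = 0` with `P₀P₁P₂` a function of `x`, and
`Q₀ + Q₁ + Q₂ = 0` with `Q₀Q₁Q₂ = -1`. Here `Qᵢ` is proportional to `(αᵢ - x) uᵢ`, for
`α = (a, b, c)` and `u` the affine coordinates, and `(P₀ : P₁ : P₂)` is given by the other three
planes. Factoring the sums of cubes `y₁³ + y₂³` and `z₁³ + z₂³` brings `W₀ × F₀` into this form,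
with `ℤ/3ℤ` scaling `P` by `ω` and `Q` by `ω⁻¹`.

The coordinates `(u, y)` on the triple cover are invariant under this action, and solving for
`x`, `P`, `Q` shows `K = ℂ(u, y)(P₂)` with `P₂³ ∈ ℂ(u)`. Hence `[K : ℂ(u, y)] ≤ 3`, while the
fixed field contains `ℂ(u, y)` and has index `3` in `K`, so the two are equal.
-/

open scoped Polynomial

section PrimeBinomials

theorem prime_of_monic_of_prime_map {R S : Type*} [CommRing R] [Nontrivial R] [CommRing S]
    {φ : R →+* S} (hφ : Function.Injective φ) {f : R[X]} (hf : f.Monic)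
    (h : Prime (f.map φ)) : Prime f := by
  refine ⟨hf.ne_zero, fun hu ↦ h.not_isUnit (hu.map (Polynomial.mapRingHom φ)), fun p q hpq ↦ ?_⟩
  simpa only [← Polynomial.map_dvd_map φ hφ hf, Polynomial.map_mul] using
    h.dvd_or_dvd (Polynomial.map_mul φ ▸ Polynomial.map_dvd φ hpq)

theorem prime_X_pow_sub_C_of_forall_pow_ne {R : Type*} [CommRing R] [IsDomain R]
    [UniqueFactorizationMonoid R] {n : ℕ} (hn : n.Prime) {p : R} (hp : ∀ r, r ^ n ≠ p) :
    Prime (Polynomial.X ^ n - Polynomial.C p) := by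
  have hmonic := Polynomial.monic_X_pow_sub_C p hn.ne_zero
  refine Irreducible.prime <| (hmonic.irreducible_iff_irreducible_map_fraction_map
    (K := FractionRing R)).2 ?_
  simp only [Polynomial.map_sub, Polynomial.map_pow, Polynomial.map_X, Polynomial.map_C]
  refine X_pow_sub_C_irreducible_of_prime hn fun b hb ↦ ?_
  obtain ⟨r, rfl⟩ := IsIntegrallyClosed.exists_algebraMap_eq_of_isIntegral_pow (R := R) hn.pos
    (hb ▸ isIntegral_algebraMap)
  exact hp r (IsFractionRing.injective R (FractionRing R) (by rw [map_pow, hb]))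

theorem pow_three_ne_neg_one_add_X_pow_three {L : Type*} [Field L] (h3 : (3 : L) ≠ 0) (r : L[X]) :
    r ^ 3 ≠ -(1 + Polynomial.X ^ 3) := by
  intro h
  have hval := congrArg (Polynomial.eval (-1)) h
  have hder := congrArg (fun p ↦ Polynomial.eval (-1) (Polynomial.derivative p)) h
  have hr : r.eval (-1) = 0 := by
    refine pow_eq_zero_iff (n := 3) three_ne_zero |>.1 ?_
    simpa [Polynomial.eval_pow, Odd.neg_one_pow (by decide : Odd 3)] using hval
  apply h3
  simpa [hr, Polynomial.derivative_pow] using hder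

theorem prime_X_pow_three_add_C {B : Type*} [CommRing B] [IsDomain B] (h3 : (3 : B) ≠ 0) :
    Prime (Polynomial.X ^ 3 + Polynomial.C (1 + Polynomial.X ^ 3) : B[X][X]) := by
  let L := FractionRing B
  have hinj : Function.Injective (algebraMap B L) := IsFractionRing.injective B L
  have h3L : (3 : L) ≠ 0 := by rwa [← map_ofNat (algebraMap B L) 3, map_ne_zero_iff _ hinj]
  refine prime_of_monic_of_prime_map (φ := Polynomial.mapRingHom (algebraMap B L))
    (Polynomial.map_injective _ hinj) (Polynomial.monic_X_pow_add_C _ three_ne_zero) ?_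
  have := prime_X_pow_sub_C_of_forall_pow_ne Nat.prime_three
    (pow_three_ne_neg_one_add_X_pow_three h3L)
  simpa [sub_eq_add_neg, add_comm] using this

end PrimeBinomials

section LastVariable

variable (R : Type*) [CommRing R] (n : ℕ)

/-- Polynomials in `n + 1` variables as univariate polynomials in the last variable, with
coefficients in the polynomial ring in the first `n` variables. -/
def lastVarEquiv : MvPolynomial (Fin (n + 1)) R ≃ₐ[R] (MvPolynomial (Fin n) R)[X] :=
  (renameEquiv R finSuccEquivLast).trans (optionEquivLeft R (Fin n))

variable {R n}

@[simp]
theorem lastVarEquiv_X_last : lastVarEquiv R n (X (Fin.last n)) = Polynomial.X := by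
  simp [lastVarEquiv]

@[simp]
theorem lastVarEquiv_X_castSucc (i : Fin n) :
    lastVarEquiv R n (X i.castSucc) = Polynomial.C (X i) := by
  simp [lastVarEquiv]

@[simp]
theorem lastVarEquiv_rename_castSucc (p : MvPolynomial (Fin n) R) :
    lastVarEquiv R n (rename Fin.castSucc p) = Polynomial.C p := by
  induction p using MvPolynomial.induction_on with
  | C r => simp [lastVarEquiv]
  | add p q hp hq => simp [hp, hq]
  | mul_X p i hp => simp [hp]

theorem prime_X_last_pow_sub_rename [IsDomain R] [UniqueFactorizationMonoid R] {m : ℕ}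
    (hm : m.Prime) {p : MvPolynomial (Fin n) R} (hp : ∀ r, r ^ m ≠ p) :
    Prime (X (Fin.last n) ^ m - rename Fin.castSucc p) := by
  rw [← MulEquiv.prime_iff (lastVarEquiv R n)]
  simpa using prime_X_pow_sub_C_of_forall_pow_ne hm hp

theorem aeval_snoc_eq_aeval_lastVarEquiv {A : Type*} [CommRing A] [Algebra R A] (u : Fin n → A)
    (y : A) (p : MvPolynomial (Fin (n + 1)) R) :
    aeval (Fin.snoc u y : Fin (n + 1) → A) p =
      (lastVarEquiv R n p).eval₂ (aeval u : MvPolynomial (Fin n) R →ₐ[R] A) y := by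
  induction p using MvPolynomial.induction_on with
  | C r => simp [lastVarEquiv]
  | add p q hp hq => simp [hp, hq]
  | mul_X p i hp => cases i using Fin.lastCases <;> simp [hp]

end LastVariable

section Relations

theorem ker_eval₂_eq_span_of_monic_of_prime {R S : Type*} [CommRing R] [IsDomain R]
    [IsIntegrallyClosed R] [CommRing S] [IsDomain S] {φ : R →+* S} (hφ : Function.Injective φ)
    {y : S} {f : R[X]} (hmonic : f.Monic) (hprime : Prime f) (hf : f.eval₂ φ y = 0) :
    RingHom.ker (Polynomial.eval₂RingHom φ y) = Ideal.span {f} := by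
  let := φ.toAlgebra
  have : Module.IsTorsionFree R S := Module.isTorsionFree_iff_algebraMap_injective.2 hφ
  have hint : IsIntegral R y := ⟨f, hmonic, hf⟩
  have hassoc : Associated (minpoly R y) f :=
    (minpoly.irreducible hint).associated_of_dvd hprime.irreducible
      (minpoly.isIntegrallyClosed_dvd hint hf)
  rw [← Ideal.span_singleton_eq_span_singleton.2 hassoc, ← minpoly.ker_eval hint]
  rfl

theorem ker_aeval_snoc_eq_span {k K : Type*} [Field k] [Field K] [Algebra k K] {n m : ℕ}
    (hm : m ≠ 0) {u : Fin n → K} (hu : AlgebraicIndependent k u) {y : K}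
    {p : MvPolynomial (Fin n) k} (hp : Prime (X (Fin.last n) ^ m - rename Fin.castSucc p))
    (hy : y ^ m = aeval u p) :
    RingHom.ker (aeval (Fin.snoc u y : Fin (n + 1) → K) : MvPolynomial (Fin (n + 1)) k →ₐ[k] K) =
      Ideal.span {X (Fin.last n) ^ m - rename Fin.castSucc p} := by
  have himage : lastVarEquiv k n (X (Fin.last n) ^ m - rename Fin.castSucc p) =
      Polynomial.X ^ m - Polynomial.C p := by simp
  have hker := ker_eval₂_eq_span_of_monic_of_prime hu
    (Polynomial.monic_X_pow_sub_C p hm) (himage ▸ (MulEquiv.prime_iff (lastVarEquiv k n)).2 hp)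
    (y := y) (by simp [hy])
  ext q
  rw [RingHom.mem_ker, aeval_snoc_eq_aeval_lastVarEquiv, Ideal.mem_span_singleton,
    ← map_dvd_iff (lastVarEquiv k n), himage, ← Ideal.mem_span_singleton, ← hker, RingHom.mem_ker,
    Polynomial.coe_eval₂RingHom]
  rfl

open scoped IntermediateField.algebraAdjoinAdjoin in
theorem nonempty_fractionRing_quotient_algEquiv_adjoin {k K ι : Type*} [Field k] [Field K]
    [Algebra k K] {v : ι → K} {I : Ideal (MvPolynomial ι k)}
    (hI : RingHom.ker (aeval v : MvPolynomial ι k →ₐ[k] K) = I) :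
    Nonempty (FractionRing (MvPolynomial ι k ⧸ I) ≃ₐ[k]
      IntermediateField.adjoin k (Set.range v)) := by
  subst hI
  exact ⟨IsFractionRing.algEquivOfAlgEquiv <| (Ideal.quotientKerEquivRange _).trans <|
    Subalgebra.equivOfEq _ _ (Algebra.adjoin_range_eq_range_aeval k v).symm⟩

end Relations

section Equations

theorem pow_ne_of_not_dvd_natDegree {A R : Type*} [CommRing A] [CommRing R] [IsDomain R] {m : ℕ}
    {p : A} (ψ : A →+* R[X]) (h : ¬m ∣ (ψ p).natDegree) (r : A) : r ^ m ≠ p := by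
  rintro rfl
  exact h (by simp [Polynomial.natDegree_pow])

theorem prime_X_last_pow_add_rename_of_prime {k : Type*} [Field k] {n m : ℕ} (hm : m.Prime)
    {p : MvPolynomial (Fin n) k} (hp : Prime p) :
    Prime (X (Fin.last n) ^ m + rename Fin.castSucc p) := by
  simpa using prime_X_last_pow_sub_rename hm (p := -p) fun r hr ↦
    not_irreducible_pow hm.ne_one (hr ▸ hp.neg.irreducible)

theorem isPrime_span_pair_of_prime_map {R S : Type*} [CommRing R] [CommRing S] {φ : R →+* S}
    (hφ : Function.Surjective φ) {f g : R} (hf : RingHom.ker φ = Ideal.span {f})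
    (hg : Prime (φ g)) : (Ideal.span {f, g}).IsPrime := by
  have : (Ideal.span {φ g}).IsPrime := (Ideal.span_singleton_prime hg.ne_zero).2 hg
  have hcomap : Ideal.span {f, g} = (Ideal.span {φ g}).comap φ := by
    rw [← Set.image_singleton, ← Ideal.map_span, Ideal.comap_map_of_surjective φ hφ,
      ← RingHom.ker_eq_comap_bot, hf, sup_comm, ← Ideal.span_union, Set.singleton_union]
  rw [hcomap]
  exact Ideal.IsPrime.comap φ

theorem isPrime_span_rename_fermat_of_ker {R B : Type*} [CommRing R] [CommRing B] [IsDomain B]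
    (h3 : (3 : B) ≠ 0) {n : ℕ} {π : MvPolynomial (Fin n) R →+* B} (hπ : Function.Surjective π)
    {p : MvPolynomial (Fin n) R} (hp : RingHom.ker π = Ideal.span {p}) :
    (Ideal.span {rename Fin.castSucc (rename Fin.castSucc p),
      1 + X (Fin.last n).castSucc ^ 3 + X (Fin.last (n + 1)) ^ 3}).IsPrime := by
  let e : MvPolynomial (Fin (n + 1 + 1)) R ≃ₐ[R] (MvPolynomial (Fin n) R)[X][X] :=
    (lastVarEquiv R (n + 1)).trans (Polynomial.mapAlgEquiv (lastVarEquiv R n))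
  let φ := (Polynomial.mapRingHom (Polynomial.mapRingHom π)).comp e.toRingEquiv.toRingHom
  have he : e (rename Fin.castSucc (rename Fin.castSucc p)) = Polynomial.C (Polynomial.C p) := by
    simp [e, -rename_rename]
  refine isPrime_span_pair_of_prime_map (φ := φ) ?_ ?_ ?_
  · exact (Polynomial.map_surjective _ <| Polynomial.map_surjective _ hπ).comp e.surjective
  · rw [← RingHom.comap_ker, Polynomial.ker_mapRingHom, Polynomial.ker_mapRingHom, hp,
      Ideal.map_span, Ideal.map_span, Set.image_singleton, Set.image_singleton, ← he]
    ext q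
    exact Ideal.mem_span_singleton.trans <| (map_dvd_iff e).trans Ideal.mem_span_singleton.symm
  · convert prime_X_pow_three_add_C h3 using 1
    simp [φ, e, add_comm]

/-- Defining polynomial of `W₀ : y₁³ + y₂³ + x(x−1)(x−a)(x−b)(x−c) = 0`, as an equation in `ℂ³`. -/
def pW₀3 (a b c : ℂ) : MvPolynomial (Fin 3) ℂ :=
  X 1 ^ 3 + X 2 ^ 3 + X 0 * (X 0 - 1) * (X 0 - C a) * (X 0 - C b) * (X 0 - C c)

theorem prime_pW₀3 (a b c : ℂ) : Prime (pW₀3 a b c) := by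
  let q : MvPolynomial (Fin 1) ℂ := X 0 * (X 0 - 1) * (X 0 - C a) * (X 0 - C b) * (X 0 - C c)
  have hq : ∀ r, r ^ 3 ≠ -q := by
    refine pow_ne_of_not_dvd_natDegree (aeval fun _ ↦ (Polynomial.X : ℂ[X])).toRingHom ?_
    have hdeg : (Polynomial.X * (Polynomial.X - 1) * (Polynomial.X - Polynomial.C a) *
        (Polynomial.X - Polynomial.C b) * (Polynomial.X - Polynomial.C c)).natDegree = 5 := by
      compute_degree!
    simp [q, hdeg]
  have hcurve : Prime (X (Fin.last 1) ^ 3 - rename Fin.castSucc (-q)) :=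
    prime_X_last_pow_sub_rename Nat.prime_three hq
  have hsurface := prime_X_last_pow_add_rename_of_prime Nat.prime_three hcurve
  have heq : pW₀3 a b c = X (Fin.last 2) ^ 3 +
      rename Fin.castSucc (X (Fin.last 1) ^ 3 - rename Fin.castSucc (-q)) := by
    simp only [pW₀3, q, Fin.reduceLast, map_neg, map_mul, map_sub, map_one, map_pow, rename_X,
      algHom_C, algebraMap_eq, Fin.castSucc_zero, Fin.castSucc_one]
    ring
  rwa [heq]

/-- The right-hand side of `y³ = x₁x₂x₃(1+x₁+x₂+x₃)(1+a·x₁+b·x₂+c·x₃)`: the product of the five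
branch planes of the triple cover that are not at infinity. -/
def branchPoly (a b c : ℂ) : MvPolynomial (Fin 3) ℂ :=
  X 0 * X 1 * X 2 * (1 + X 0 + X 1 + X 2) * (1 + C a * X 0 + C b * X 1 + C c * X 2)

theorem pX₁_eq (a b c : ℂ) :
    pX₁ a b c = X (Fin.last 3) ^ 3 - rename Fin.castSucc (branchPoly a b c) := by
  simp [pX₁, branchPoly]

theorem pow_three_ne_branchPoly (a b c : ℂ) (r : MvPolynomial (Fin 3) ℂ) :
    r ^ 3 ≠ branchPoly a b c := by
  let ψ : MvPolynomial (Fin 3) ℂ →ₐ[ℂ] ℂ[X] := aeval fun _ ↦ Polynomial.X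
  refine pow_ne_of_not_dvd_natDegree ψ.toRingHom ?_ r
  have hψ : ψ (branchPoly a b c) = Polynomial.X ^ 3 * (1 + 3 * Polynomial.X) *
      (1 + Polynomial.C (a + b + c) * Polynomial.X) := by
    simp only [ψ, branchPoly, map_add, map_mul, map_one, aeval_X, algHom_C,
      Polynomial.algebraMap_eq]
    ring
  have hdeg : (Polynomial.X ^ 3 * (1 + 3 * Polynomial.X) : ℂ[X]).natDegree = 4 := by
    compute_degree!
  rw [AlgHom.toRingHom_eq_coe, RingHom.coe_coe, hψ]
  rcases eq_or_ne (a + b + c) 0 with h | h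
  · simp [h, hdeg]
  · have hdeg' : (1 + Polynomial.C (a + b + c) * Polynomial.X).natDegree = 1 := by
      compute_degree!
    rw [Polynomial.natDegree_mul (Polynomial.ne_zero_of_natDegree_gt (n := 0) (by lia))
      (Polynomial.ne_zero_of_natDegree_gt (n := 0) (by lia)), hdeg, hdeg']
    decide

instance isPrime_span_pW₀5_pF₀5 (a b c : ℂ) : (Ideal.span {pW₀5 a b c, pF₀5}).IsPrime := by
  have hW := prime_pW₀3 a b c
  have : (Ideal.span {pW₀3 a b c}).IsPrime := (Ideal.span_singleton_prime hW.ne_zero).2 hW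
  have : CharZero (HSurf (pW₀3 a b c)) :=
    charZero_of_injective_algebraMap (algebraMap ℂ _).injective
  have heq : pW₀5 a b c = rename Fin.castSucc (rename Fin.castSucc (pW₀3 a b c)) := by
    simp [pW₀5, pW₀3, q5]
  exact heq ▸ isPrime_span_rename_fermat_of_ker (B := HSurf (pW₀3 a b c))
    (OfNat.ofNat_ne_zero 3) Ideal.Quotient.mk_surjective Ideal.mk_ker

theorem prime_pX₁ (a b c : ℂ) : Prime (pX₁ a b c) :=
  pX₁_eq a b c ▸ prime_X_last_pow_sub_rename Nat.prime_three (pow_three_ne_branchPoly a b c)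

end Equations

section FixedFields

open IntermediateField

variable {k K : Type*} [Field k] [Field K] [Algebra k K]

theorem mem_fixedField_zpowers_iff {σ : K ≃ₐ[k] K} {x : K} :
    x ∈ fixedField (Subgroup.zpowers σ) ↔ σ x = x := by
  refine ⟨fun h ↦ (mem_fixedField_iff _ x).1 h σ (Subgroup.mem_zpowers σ), fun h ↦ ?_⟩
  refine (mem_fixedField_iff _ x).2 fun τ hτ ↦ ?_
  exact Subgroup.zpowers_le (H := MulAction.stabilizer (K ≃ₐ[k] K) x).2 h hτ

theorem fixedField_zpowers_eq_equalizer (σ : K ≃ₐ[k] K) :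
    (fixedField (Subgroup.zpowers σ)).toSubalgebra =
      AlgHom.equalizer σ.toAlgHom (AlgHom.id k K) := by
  ext x
  exact mem_fixedField_zpowers_iff

theorem fixedField_zpowers_eq_of_finrank_le {σ : K ≃ₐ[k] K} {E : IntermediateField k K}
    [FiniteDimensional E K] (hE : E ≤ fixedField (Subgroup.zpowers σ))
    (hrank : Module.finrank E K ≤ orderOf σ) : fixedField (Subgroup.zpowers σ) = E := by
  set F := fixedField (Subgroup.zpowers σ)
  have hfin : FiniteDimensional F K := by
    let := (inclusion hE).toAlgebra
    have : IsScalarTower E F K := .of_algebraMap_eq fun _ ↦ rfl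
    exact Module.Finite.right E F K
  refine (eq_of_le_of_finrank_le' hE (hrank.trans ?_)).symm
  have hfix : Subgroup.zpowers σ ≤ fixingSubgroup F := le_iff_le _ _ |>.1 le_rfl
  calc orderOf σ = Nat.card (Subgroup.zpowers σ) := (Nat.card_zpowers σ).symm
    _ ≤ Nat.card (fixingSubgroup F) := by
      have : Finite (fixingSubgroup F) := .of_equiv _ (fixingSubgroupEquiv F).symm.toEquiv
      exact Subgroup.card_le_of_le hfix
    _ = Nat.card (K ≃ₐ[F] K) := Nat.card_congr (fixingSubgroupEquiv F).toEquiv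
    _ ≤ Module.finrank F K := Nat.card_eq_fintype_card (α := K ≃ₐ[F] K) ▸ AlgEquiv.card_le

theorem finrank_le_of_adjoin_simple_eq_top_of_pow_mem {E K : Type*} [Field E] [Field K]
    [Algebra E K] {t : K} (ht : E⟮t⟯ = ⊤) {n : ℕ} (hn : 0 < n) {r : E}
    (hr : algebraMap E K r = t ^ n) : FiniteDimensional E K ∧ Module.finrank E K ≤ n := by
  have hmonic := Polynomial.monic_X_pow_sub_C r hn.ne'
  have hroot : Polynomial.aeval t (Polynomial.X ^ n - Polynomial.C r) = 0 := by simp [hr]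
  have hint : IsIntegral E t := ⟨_, hmonic, hroot⟩
  have : FiniteDimensional E E⟮t⟯ := adjoin.finiteDimensional hint
  rw [ht] at this
  refine ⟨Module.Finite.equiv (topEquiv (F := E) (E := K)).toLinearEquiv, ?_⟩
  rw [← finrank_top' (F := E) (E := K), ← ht, adjoin.finrank hint,
    ← Polynomial.natDegree_X_pow_sub_C (n := n) (r := r)]
  exact Polynomial.natDegree_le_natDegree (minpoly.min E t hmonic hroot)

theorem algebraicIndependent_of_isAlgebraic_adjoin {ι : Type*} [Finite ι] {v u : ι → K}
    (hv : AlgebraicIndependent k v) (hu : Algebra.IsAlgebraic (adjoin k (Set.range u)) K) :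
    AlgebraicIndependent k u := by
  have : Algebra.IsAlgebraic (Algebra.adjoin k (Set.range u)) K := isAlgebraic_adjoin_iff_top.1 hu
  exact (Algebra.IsAlgebraic.isTranscendenceBasis_of_lift_le_trdeg_of_finite k u
    hv.lift_cardinalMk_le_trdeg).1

theorem isAlgebraic_of_adjoin_eq_top_of_pow_mem {E : IntermediateField k K} {T : Set K}
    (h : adjoin E T = ⊤) {n : ℕ} (hn : 0 < n) (hT : ∀ t ∈ T, t ^ n ∈ E) :
    Algebra.IsAlgebraic E K := by
  rw [← algebraicClosure.eq_top_iff, eq_top_iff, ← h, adjoin_le_iff]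
  intro t ht
  exact mem_algebraicClosure_iff.2 <| .of_pow hn <|
    isAlgebraic_algebraMap (⟨t ^ n, hT t ht⟩ : E)

end FixedFields

section PencilPoints

variable {K : Type*} [Field K]

/-- A point `(x, P, Q)` of the product of the cubics `P₀ + P₁ + P₂ = 0`,
`P₀P₁P₂ = -x(x-1)∏(x-αᵢ)` and `Q₀ + Q₁ + Q₂ = 0`, `Q₀Q₁Q₂ = -1` at which the map
`(baseCoord, coverCoord)` to the triple cover of space is defined and invertible. -/
structure IsPencilPoint (α : Fin 3 → K) (x : K) (P Q : Fin 3 → K) : Prop where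
  sum_P : ∑ i, P i = 0
  prod_P : ∏ i, P i = -(x * (x - 1) * ∏ i, (x - α i))
  sum_Q : ∑ i, Q i = 0
  prod_Q : ∏ i, Q i = -1
  ne_zero : x ≠ 0
  ne_one : x ≠ 1
  ne_root (i : Fin 3) : x ≠ α i
  P_zero_add_mul_P_one_ne_zero : P 0 + x * P 1 ≠ 0
  sum_Q_div_ne_zero : ∑ i, Q i / (α i - x) ≠ 0

/-- The common factor `μ` with `uᵢ = μ Qᵢ / (αᵢ - x)`, normalized so that
`u₀ + u₁ + u₂ = (P₀ + xP₁) / (xP₂)`. -/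
def pencilFactor (α : Fin 3 → K) (x : K) (P Q : Fin 3 → K) : K :=
  (P 0 + x * P 1) / (x * P 2) / ∑ i, Q i / (α i - x)

/-- The affine coordinates `uᵢ` on space of the image of `(x, P, Q)`. -/
def baseCoord (α : Fin 3 → K) (x : K) (P Q : Fin 3 → K) (i : Fin 3) : K :=
  pencilFactor α x P Q * Q i / (α i - x)

/-- The coordinate `y` of the image of `(x, P, Q)` in the triple cover of space. -/
def coverCoord (α : Fin 3 → K) (x : K) (P Q : Fin 3 → K) : K :=
  -(pencilFactor α x P Q * (1 - x)) / P 2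

theorem pencilFactor_smul_inv_smul {r : K} (hr : r ≠ 0) (α : Fin 3 → K) (x : K)
    (P Q : Fin 3 → K) :
    pencilFactor α x (r • P) (r⁻¹ • Q) = r * pencilFactor α x P Q := by
  have hnum : (r • P) 0 + x * (r • P) 1 = r * (P 0 + x * P 1) := by
    simp only [Pi.smul_apply, smul_eq_mul]; ring
  have hden : x * (r • P) 2 = r * (x * P 2) := by
    simp only [Pi.smul_apply, smul_eq_mul]; ring
  have hsum : ∑ i, (r⁻¹ • Q) i / (α i - x) = r⁻¹ * ∑ i, Q i / (α i - x) := by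
    simp only [Pi.smul_apply, smul_eq_mul, Finset.mul_sum, mul_div_assoc]
  rw [pencilFactor, hnum, hden, hsum, mul_div_mul_left _ _ hr, div_mul_eq_div_div_swap,
    div_inv_eq_mul, mul_comm, pencilFactor]

theorem baseCoord_smul_inv_smul {r : K} (hr : r ≠ 0) (α : Fin 3 → K) (x : K) (P Q : Fin 3 → K) :
    baseCoord α x (r • P) (r⁻¹ • Q) = baseCoord α x P Q := by
  ext i
  rw [baseCoord, pencilFactor_smul_inv_smul hr, Pi.smul_apply, smul_eq_mul, mul_mul_mul_comm,
    mul_inv_cancel₀ hr, one_mul, baseCoord]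

theorem coverCoord_smul_inv_smul {r : K} (hr : r ≠ 0) (α : Fin 3 → K) (x : K) (P Q : Fin 3 → K) :
    coverCoord α x (r • P) (r⁻¹ • Q) = coverCoord α x P Q := by
  rw [coverCoord, pencilFactor_smul_inv_smul hr, Pi.smul_apply, smul_eq_mul, mul_assoc,
    ← mul_neg, mul_div_mul_left _ _ hr, coverCoord]

theorem map_pencilFactor {L : Type*} [Field L] (σ : K →+* L) (α : Fin 3 → K) (x : K)
    (P Q : Fin 3 → K) :
    σ (pencilFactor α x P Q) = pencilFactor (σ ∘ α) (σ x) (σ ∘ P) (σ ∘ Q) := by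
  simp [pencilFactor]

theorem map_baseCoord {L : Type*} [Field L] (σ : K →+* L) (α : Fin 3 → K) (x : K)
    (P Q : Fin 3 → K) (i : Fin 3) :
    σ (baseCoord α x P Q i) = baseCoord (σ ∘ α) (σ x) (σ ∘ P) (σ ∘ Q) i := by
  simp [baseCoord, map_pencilFactor]

theorem map_coverCoord {L : Type*} [Field L] (σ : K →+* L) (α : Fin 3 → K) (x : K)
    (P Q : Fin 3 → K) :
    σ (coverCoord α x P Q) = coverCoord (σ ∘ α) (σ x) (σ ∘ P) (σ ∘ Q) := by
  simp [coverCoord, map_pencilFactor]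

namespace IsPencilPoint

variable {α : Fin 3 → K} {x : K} {P Q : Fin 3 → K}

theorem prod_P_ne_zero (h : IsPencilPoint α x P Q) : ∏ i, P i ≠ 0 := by
  rw [h.prod_P]
  simp [Finset.prod_eq_zero_iff, sub_eq_zero, h.ne_zero, h.ne_one, h.ne_root]

theorem P_two_ne_zero (h : IsPencilPoint α x P Q) : P 2 ≠ 0 :=
  Finset.prod_ne_zero_iff.1 h.prod_P_ne_zero 2 (Finset.mem_univ 2)

theorem pencilFactor_ne_zero (h : IsPencilPoint α x P Q) : pencilFactor α x P Q ≠ 0 :=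
  div_ne_zero (div_ne_zero h.P_zero_add_mul_P_one_ne_zero <|
    mul_ne_zero h.ne_zero h.P_two_ne_zero) h.sum_Q_div_ne_zero

theorem sub_mul_baseCoord (h : IsPencilPoint α x P Q) (i : Fin 3) :
    (α i - x) * baseCoord α x P Q i = pencilFactor α x P Q * Q i :=
  mul_div_cancel₀ _ (sub_ne_zero.2 (h.ne_root i).symm)

theorem mul_coverCoord (h : IsPencilPoint α x P Q) :
    P 2 * coverCoord α x P Q = -(pencilFactor α x P Q * (1 - x)) :=
  mul_div_cancel₀ _ h.P_two_ne_zero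

theorem coverCoord_ne_zero (h : IsPencilPoint α x P Q) : coverCoord α x P Q ≠ 0 :=
  div_ne_zero (neg_ne_zero.2 <| mul_ne_zero h.pencilFactor_ne_zero <|
    sub_ne_zero.2 h.ne_one.symm) h.P_two_ne_zero

theorem sum_baseCoord (h : IsPencilPoint α x P Q) :
    ∑ i, baseCoord α x P Q i = (P 0 + x * P 1) / (x * P 2) := by
  simp only [baseCoord, mul_div_assoc, ← Finset.mul_sum]
  exact div_mul_cancel₀ _ h.sum_Q_div_ne_zero

theorem sum_baseCoord_ne_zero (h : IsPencilPoint α x P Q) : ∑ i, baseCoord α x P Q i ≠ 0 := by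
  rw [h.sum_baseCoord]
  exact div_ne_zero h.P_zero_add_mul_P_one_ne_zero (mul_ne_zero h.ne_zero h.P_two_ne_zero)

theorem sum_mul_baseCoord (h : IsPencilPoint α x P Q) :
    ∑ i, α i * baseCoord α x P Q i = x * ∑ i, baseCoord α x P Q i := by
  have hzero : ∑ i, (α i - x) * baseCoord α x P Q i = 0 := by
    simp only [h.sub_mul_baseCoord, ← Finset.mul_sum, h.sum_Q, mul_zero]
  simp only [sub_mul, Finset.sum_sub_distrib, ← Finset.mul_sum] at hzero
  exact sub_eq_zero.1 hzero

theorem mul_one_add_sum_baseCoord (h : IsPencilPoint α x P Q) :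
    x * P 2 * (1 + ∑ i, baseCoord α x P Q i) = (1 - x) * P 0 := by
  have hsum := h.sum_P
  rw [Fin.sum_univ_three] at hsum
  rw [h.sum_baseCoord, mul_add, mul_div_cancel₀ _ (mul_ne_zero h.ne_zero h.P_two_ne_zero)]
  linear_combination x * hsum

theorem mul_one_add_sum_mul_baseCoord (h : IsPencilPoint α x P Q) :
    P 2 * (1 + ∑ i, α i * baseCoord α x P Q i) = -((1 - x) * P 1) := by
  have hx := h.ne_zero
  have hP := h.P_two_ne_zero
  have hsum := h.sum_P
  rw [Fin.sum_univ_three] at hsum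
  rw [h.sum_mul_baseCoord, h.sum_baseCoord]
  field_simp
  linear_combination hsum

theorem coverCoord_pow_three (h : IsPencilPoint α x P Q) :
    coverCoord α x P Q ^ 3 = (∏ i, baseCoord α x P Q i) * (1 + ∑ i, baseCoord α x P Q i) *
      (1 + ∑ i, α i * baseCoord α x P Q i) := by
  set μ := pencilFactor α x P Q
  have hroots : ∏ i, (α i - x) ≠ 0 :=
    Finset.prod_ne_zero_iff.2 fun i _ ↦ sub_ne_zero.2 (h.ne_root i).symm
  have hprod : (∏ i, (α i - x)) * ∏ i, baseCoord α x P Q i = -μ ^ 3 := by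
    simp only [← Finset.prod_mul_distrib, h.sub_mul_baseCoord]
    rw [Finset.prod_mul_distrib, h.prod_Q]
    simp [μ]
  have hne : (∏ i, (α i - x)) * (x * P 2 ^ 3 * (1 - x)) ≠ 0 :=
    mul_ne_zero hroots <| mul_ne_zero (mul_ne_zero h.ne_zero (pow_ne_zero 3 h.P_two_ne_zero)) <|
      sub_ne_zero.2 h.ne_one.symm
  refine mul_left_cancel₀ hne ?_
  calc (∏ i, (α i - x)) * (x * P 2 ^ 3 * (1 - x)) * coverCoord α x P Q ^ 3
      = (∏ i, (α i - x)) * x * (1 - x) * (P 2 * coverCoord α x P Q) ^ 3 := by ring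
    _ = -μ ^ 3 * ((1 - x) * P 0) * (-((1 - x) * P 1)) * (P 2 * (1 - x)) := by
      have hP := h.prod_P
      simp only [Fin.prod_univ_three] at hP ⊢
      rw [h.mul_coverCoord]
      linear_combination -μ ^ 3 * (1 - x) ^ 3 * hP
    _ = _ := by
      rw [← hprod, ← h.mul_one_add_sum_baseCoord, ← h.mul_one_add_sum_mul_baseCoord]
      ring

theorem eq_sum_mul_baseCoord_div_sum (h : IsPencilPoint α x P Q) :
    x = (∑ i, α i * baseCoord α x P Q i) / ∑ i, baseCoord α x P Q i := by
  rw [h.sum_mul_baseCoord, mul_div_cancel_right₀ _ h.sum_baseCoord_ne_zero]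

theorem P_zero_eq (h : IsPencilPoint α x P Q) :
    P 0 = x * (1 + ∑ i, baseCoord α x P Q i) / (1 - x) * P 2 := by
  have hx := sub_ne_zero.2 h.ne_one.symm
  field_simp
  linear_combination -h.mul_one_add_sum_baseCoord

theorem P_one_eq (h : IsPencilPoint α x P Q) :
    P 1 = -((1 + ∑ i, α i * baseCoord α x P Q i) / (1 - x)) * P 2 := by
  have hx := sub_ne_zero.2 h.ne_one.symm
  field_simp
  linear_combination h.mul_one_add_sum_mul_baseCoord

theorem Q_eq (h : IsPencilPoint α x P Q) (i : Fin 3) :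
    Q i = -(baseCoord α x P Q i / coverCoord α x P Q) * (α i - x) * (1 - x) / P 2 := by
  have hP := h.P_two_ne_zero
  have hy := h.coverCoord_ne_zero
  field_simp
  linear_combination Q i * h.mul_coverCoord + (1 - x) * h.sub_mul_baseCoord i

section Membership

variable {S : Type*} [SetLike S K] [SubfieldClass S K] {G : S}

theorem mem_of_baseCoord_mem (h : IsPencilPoint α x P Q) (hα : ∀ i, α i ∈ G)
    (hu : ∀ i, baseCoord α x P Q i ∈ G) : x ∈ G := by
  rw [h.eq_sum_mul_baseCoord_div_sum]
  exact div_mem (sum_mem fun i _ ↦ mul_mem (hα i) (hu i)) (sum_mem fun i _ ↦ hu i)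

theorem exists_P_eq_mul_of_baseCoord_mem (h : IsPencilPoint α x P Q) (hα : ∀ i, α i ∈ G)
    (hu : ∀ i, baseCoord α x P Q i ∈ G) :
    ∃ r ∈ G, ∃ s ∈ G, P 0 = r * P 2 ∧ P 1 = s * P 2 := by
  have hx := h.mem_of_baseCoord_mem hα hu
  refine ⟨_, ?_, _, ?_, h.P_zero_eq, h.P_one_eq⟩
  · exact div_mem (mul_mem hx (add_mem (one_mem G) (sum_mem fun i _ ↦ hu i)))
      (sub_mem (one_mem G) hx)
  · exact neg_mem (div_mem (add_mem (one_mem G) (sum_mem fun i _ ↦ mul_mem (hα i) (hu i)))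
      (sub_mem (one_mem G) hx))

theorem P_two_pow_three_mem (h : IsPencilPoint α x P Q) (hα : ∀ i, α i ∈ G)
    (hu : ∀ i, baseCoord α x P Q i ∈ G) : P 2 ^ 3 ∈ G := by
  have hx := h.mem_of_baseCoord_mem hα hu
  obtain ⟨r, hr, s, hs, hP₀, hP₁⟩ := h.exists_P_eq_mul_of_baseCoord_mem hα hu
  have hprod : r * s * P 2 ^ 3 = -(x * (x - 1) * ∏ i, (x - α i)) := by
    rw [← h.prod_P, Fin.prod_univ_three, hP₀, hP₁]
    ring
  have hrs : r * s ≠ 0 := fun hrs ↦ h.prod_P_ne_zero (by rw [h.prod_P, ← hprod, hrs, zero_mul])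
  rw [eq_div_of_mul_eq hrs ((mul_comm _ _).trans hprod)]
  exact div_mem (neg_mem (mul_mem (mul_mem hx (sub_mem hx (one_mem G)))
    (prod_mem fun i _ ↦ sub_mem hx (hα i)))) (mul_mem hr hs)

theorem mem_of_baseCoord_mem_of_coverCoord_mem (h : IsPencilPoint α x P Q) (hα : ∀ i, α i ∈ G)
    (hu : ∀ i, baseCoord α x P Q i ∈ G) (hy : coverCoord α x P Q ∈ G) (hP : P 2 ∈ G) (i : Fin 3) :
    P i ∈ G ∧ Q i ∈ G := by
  have hx := h.mem_of_baseCoord_mem hα hu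
  obtain ⟨r, hr, s, hs, hP₀, hP₁⟩ := h.exists_P_eq_mul_of_baseCoord_mem hα hu
  refine ⟨?_, ?_⟩
  · fin_cases i
    exacts [hP₀ ▸ mul_mem hr hP, hP₁ ▸ mul_mem hs hP, hP]
  · rw [h.Q_eq]
    exact div_mem (mul_mem (mul_mem (neg_mem (div_mem (hu i) hy)) (sub_mem (hα i) hx))
      (sub_mem (one_mem G) hx)) hP

end Membership

end IsPencilPoint

end PencilPoints

section FunctionFieldOfQuotient

open IntermediateField

variable {k K : Type*} [Field k] [Field K] [Algebra k K]

theorem adjoin_adjoin_eq_top_of_adjoin_union_eq_top {S T : Set K} (h : adjoin k (S ∪ T) = ⊤) :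
    adjoin (adjoin k S) T = ⊤ := by
  rw [← restrictScalars_eq_top_iff (K := k), adjoin_adjoin_left, h]

namespace IsPencilPoint

variable {α : Fin 3 → k} {x : K} {P Q : Fin 3 → K}

theorem adjoin_eq_top (h : IsPencilPoint (algebraMap k K ∘ α) x P Q)
    (hgen : adjoin k ({x} ∪ (Set.range P ∪ Set.range Q)) = ⊤) :
    adjoin k (Set.range (baseCoord (algebraMap k K ∘ α) x P Q) ∪
      {coverCoord (algebraMap k K ∘ α) x P Q, P 2}) = ⊤ := by
  set G := adjoin k (Set.range (baseCoord (algebraMap k K ∘ α) x P Q) ∪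
    {coverCoord (algebraMap k K ∘ α) x P Q, P 2})
  have hα (i) : (algebraMap k K ∘ α) i ∈ G := G.algebraMap_mem (α i)
  have hu (i) : baseCoord (algebraMap k K ∘ α) x P Q i ∈ G := subset_adjoin _ _ (by simp)
  have hPQ := h.mem_of_baseCoord_mem_of_coverCoord_mem hα hu
    (subset_adjoin _ _ (by simp)) (subset_adjoin _ _ (by simp))
  rw [eq_top_iff, ← hgen, adjoin_le_iff, Set.union_subset_iff, Set.singleton_subset_iff,
    Set.union_subset_iff, Set.range_subset_iff, Set.range_subset_iff]
  exact ⟨h.mem_of_baseCoord_mem hα hu, fun i ↦ (hPQ i).1, fun i ↦ (hPQ i).2⟩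

theorem algebraicIndependent_baseCoord (h : IsPencilPoint (algebraMap k K ∘ α) x P Q)
    (hgen : adjoin k ({x} ∪ (Set.range P ∪ Set.range Q)) = ⊤) {v : Fin 3 → K}
    (hv : AlgebraicIndependent k v) :
    AlgebraicIndependent k (baseCoord (algebraMap k K ∘ α) x P Q) := by
  have hα {G : IntermediateField k K} (i) : (algebraMap k K ∘ α) i ∈ G := G.algebraMap_mem (α i)
  have hu (i) : baseCoord (algebraMap k K ∘ α) x P Q i ∈
    adjoin k (Set.range (baseCoord (algebraMap k K ∘ α) x P Q)) := subset_adjoin _ _ (by simp)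
  refine algebraicIndependent_of_isAlgebraic_adjoin hv <|
    isAlgebraic_of_adjoin_eq_top_of_pow_mem
      (adjoin_adjoin_eq_top_of_adjoin_union_eq_top (h.adjoin_eq_top hgen)) three_pos ?_
  rintro t (rfl | rfl)
  · rw [h.coverCoord_pow_three]
    exact mul_mem (mul_mem (prod_mem fun i _ ↦ hu i) (add_mem (one_mem _) (sum_mem fun i _ ↦ hu i)))
      (add_mem (one_mem _) (sum_mem fun i _ ↦ mul_mem (hα i) (hu i)))
  · exact h.P_two_pow_three_mem hα hu

theorem fixedField_zpowers_eq_adjoin (h : IsPencilPoint (algebraMap k K ∘ α) x P Q)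
    (hgen : adjoin k ({x} ∪ (Set.range P ∪ Set.range Q)) = ⊤) {σ : K ≃ₐ[k] K}
    (hσ : 3 ≤ orderOf σ) (hx : σ x = x) {r : K} (hr : r ≠ 0) (hP : σ ∘ P = r • P)
    (hQ : σ ∘ Q = r⁻¹ • Q) :
    fixedField (Subgroup.zpowers σ) =
      adjoin k (Set.range (Fin.snoc (baseCoord (algebraMap k K ∘ α) x P Q)
        (coverCoord (algebraMap k K ∘ α) x P Q) : Fin (3 + 1) → K)) := by
  set u := baseCoord (algebraMap k K ∘ α) x P Q
  set y := coverCoord (algebraMap k K ∘ α) x P Q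
  set E := adjoin k (Set.range (Fin.snoc u y : Fin (3 + 1) → K))
  have hα : σ ∘ algebraMap k K ∘ α = algebraMap k K ∘ α := funext fun i ↦ σ.commutes (α i)
  have hσu (i) : σ (u i) = u i := by
    have := map_baseCoord (σ : K →+* K) (algebraMap k K ∘ α) x P Q i
    simpa only [RingHom.coe_coe, hα, hx, hP, hQ, baseCoord_smul_inv_smul hr] using this
  have hσy : σ y = y := by
    have := map_coverCoord (σ : K →+* K) (algebraMap k K ∘ α) x P Q
    simpa only [RingHom.coe_coe, hα, hx, hP, hQ, coverCoord_smul_inv_smul hr] using this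
  have hrange : Set.range (Fin.snoc u y : Fin (3 + 1) → K) = Set.range u ∪ {y} := by
    rw [Fin.range_snoc, Set.union_singleton]
  have hle : E ≤ fixedField (Subgroup.zpowers σ) := by
    rw [adjoin_le_iff, hrange, Set.union_singleton, Set.insert_subset_iff, Set.range_subset_iff]
    exact ⟨mem_fixedField_zpowers_iff.2 hσy, fun i ↦ mem_fixedField_zpowers_iff.2 (hσu i)⟩
  have htop : E⟮P 2⟯ = ⊤ := by
    refine adjoin_adjoin_eq_top_of_adjoin_union_eq_top ?_
    rw [hrange, Set.union_assoc, Set.singleton_union]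
    exact h.adjoin_eq_top hgen
  have hmem : P 2 ^ 3 ∈ E := h.P_two_pow_three_mem (fun i ↦ E.algebraMap_mem (α i)) fun i ↦
    subset_adjoin _ _ (hrange ▸ .inl (Set.mem_range_self i))
  obtain ⟨_, hrank⟩ := finrank_le_of_adjoin_simple_eq_top_of_pow_mem htop three_pos
    (r := ⟨P 2 ^ 3, hmem⟩) rfl
  exact fixedField_zpowers_eq_of_finrank_le hle (hrank.trans hσ)

end IsPencilPoint

end FunctionFieldOfQuotient

section CoordFun

open IntermediateField

variable {k ι : Type*} [Field k]

/-- The rescaling of the variables of a polynomial ring by units. -/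
def scaleVars (w : ι → kˣ) : MvPolynomial ι k ≃ₐ[k] MvPolynomial ι k :=
  .ofAlgHom (aeval fun i ↦ (w i : k) • X i) (aeval fun i ↦ ((w i)⁻¹ : kˣ) • X i)
    (by ext; simp [Units.smul_def, smul_smul]) (by ext; simp [Units.smul_def, smul_smul])

theorem scaleVars_X (w : ι → kˣ) (i : ι) : scaleVars w (X i : MvPolynomial ι k) = w i • X i := by
  simp [scaleVars, Units.smul_def]

/-- The coordinate functions of the affine variety `V(I)`, as elements of its function field. -/
def coordFun (I : Ideal (MvPolynomial ι k)) (i : ι) :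
    FractionRing (MvPolynomial ι k ⧸ I) :=
  algebraMap _ _ (Ideal.Quotient.mk I (X i))

theorem aeval_coordFun (I : Ideal (MvPolynomial ι k)) (p : MvPolynomial ι k) :
    aeval (coordFun I) p = algebraMap _ (FractionRing (MvPolynomial ι k ⧸ I))
      (Ideal.Quotient.mk I p) := by
  change _ = ((IsScalarTower.toAlgHom k _ _).comp (Ideal.Quotient.mkₐ k I)) p
  congr 1
  ext i
  simp [coordFun]

theorem ker_aeval_coordFun (I : Ideal (MvPolynomial ι k)) :
    RingHom.ker (aeval (coordFun I) : MvPolynomial ι k →ₐ[k] _) = I := by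
  ext p
  rw [RingHom.mem_ker, aeval_coordFun, map_eq_zero_iff _ (IsFractionRing.injective _ _),
    Ideal.Quotient.eq_zero_iff_mem]

variable {I : Ideal (MvPolynomial ι k)}

theorem exists_algEquiv_coordFun_eq_smul {w : ι → kˣ} (hI : I.map (scaleVars w) = I) :
    ∃ σ : FractionRing (MvPolynomial ι k ⧸ I) ≃ₐ[k] FractionRing (MvPolynomial ι k ⧸ I),
      ∀ i, σ (coordFun I i) = (w i : k) • coordFun I i := by
  let e := Ideal.quotientEquivAlg I I (scaleVars w) hI.symm
  refine ⟨IsFractionRing.algEquivOfAlgEquiv e, fun i ↦ ?_⟩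
  have he : e (Ideal.Quotient.mk I (X i)) = (w i : k) • Ideal.Quotient.mk I (X i) :=
    congrArg (Ideal.Quotient.mk I) (scaleVars_X w i)
  rw [coordFun, IsFractionRing.algEquivOfAlgEquiv_algebraMap, he]
  exact map_smul (IsScalarTower.toAlgHom k _ _) _ _

theorem adjoin_range_coordFun [I.IsPrime] : adjoin k (Set.range (coordFun I)) = ⊤ := by
  have hmem (q : MvPolynomial ι k ⧸ I) :
      algebraMap _ (FractionRing _) q ∈ adjoin k (Set.range (coordFun I)) := by
    obtain ⟨p, rfl⟩ := Ideal.Quotient.mk_surjective q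
    rw [← aeval_coordFun]
    refine algebra_adjoin_le_adjoin k _ ?_
    rw [Algebra.adjoin_range_eq_range_aeval]
    exact ⟨p, rfl⟩
  refine eq_top_iff.2 fun z _ ↦ ?_
  obtain ⟨p, q, -, rfl⟩ := IsFractionRing.div_surjective (MvPolynomial ι k ⧸ I) z
  exact div_mem (hmem p) (hmem q)

theorem orderOf_eq_prime_of_eigenvectors {K : Type*} [Field K] [Algebra k K] {v : ι → K}
    (hv : adjoin k (Set.range v) = ⊤) {σ : K ≃ₐ[k] K} {w : ι → k}
    (hσ : ∀ i, σ (v i) = w i • v i) {p : ℕ} [Fact p.Prime] (hw : ∀ i, w i ^ p = 1) {i : ι}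
    (hi : w i ≠ 1) (hvi : v i ≠ 0) : orderOf σ = p := by
  have hpow (n : ℕ) (j : ι) : (σ ^ n) (v j) = w j ^ n • v j := by
    induction n with
    | zero => simp
    | succ n ih => rw [pow_succ', AlgEquiv.mul_apply, ih, map_smul, hσ, smul_smul, pow_succ]
  refine orderOf_eq_prime (AlgEquiv.ext fun x ↦ ?_) fun h ↦ hi ?_
  · have htop : fixedField (Subgroup.zpowers (σ ^ p)) = ⊤ := by
      rw [eq_top_iff, ← hv, adjoin_le_iff, Set.range_subset_iff]
      exact fun j ↦ mem_fixedField_zpowers_iff.2 <| by rw [hpow, hw, one_smul]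
    exact mem_fixedField_zpowers_iff.1 (htop ▸ mem_top)
  · refine smul_left_injective k hvi ?_
    simpa [h] using (hσ i).symm

end CoordFun

section ConcurrentLines

variable {K : Type*} [Field K]

/-- The three lines through the origin of the `(s, t)`-plane whose union is `s³ + t³ = 0`, when `ζ`
is a primitive cube root of unity. -/
def concurrentLines (ζ s t : K) (i : Fin 3) : K :=
  ζ ^ (i : ℕ) * s + ζ ^ (2 * (i : ℕ)) * t

theorem smul_concurrentLines (r ζ s t : K) :
    r • concurrentLines ζ s t = concurrentLines ζ (r * s) (r * t) := by
  ext i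
  simp only [Pi.smul_apply, smul_eq_mul, concurrentLines]
  ring

theorem map_comp_concurrentLines {L : Type*} [Field L] (σ : K →+* L) (ζ s t : K) :
    σ ∘ concurrentLines ζ s t = concurrentLines (σ ζ) (σ s) (σ t) := by
  ext i
  simp [concurrentLines]

variable {ζ : K}

theorem one_add_add_sq_eq_zero (hζ : IsPrimitiveRoot ζ 3) : 1 + ζ + ζ ^ 2 = 0 := by
  simpa [Finset.sum_range_succ] using hζ.geom_sum_eq_zero (by decide)

theorem sum_concurrentLines (hζ : IsPrimitiveRoot ζ 3) (s t : K) :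
    ∑ i, concurrentLines ζ s t i = 0 := by
  simp only [Fin.sum_univ_three, concurrentLines, Fin.val_zero, Fin.val_one, Fin.val_two]
  linear_combination (s + t * (1 - ζ + ζ ^ 2)) * one_add_add_sq_eq_zero hζ

theorem prod_concurrentLines (hζ : IsPrimitiveRoot ζ 3) (s t : K) :
    ∏ i, concurrentLines ζ s t i = s ^ 3 + t ^ 3 := by
  simp only [Fin.prod_univ_three, concurrentLines, Fin.val_zero, Fin.val_one, Fin.val_two]
  linear_combination (ζ ^ 3 * s ^ 2 * t + ζ ^ 4 * s * t ^ 2) * one_add_add_sq_eq_zero hζ +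
    (s ^ 3 + (ζ ^ 3 + 1) * t ^ 3) * hζ.pow_eq_one

theorem mem_of_concurrentLines_mem (hζ : IsPrimitiveRoot ζ 3) {S : Type*} [SetLike S K]
    [SubfieldClass S K] {G : S} (hζG : ζ ∈ G) {s t : K} (h : ∀ i, concurrentLines ζ s t i ∈ G) :
    s ∈ G ∧ t ∈ G := by
  have hs : 3 * s = ∑ i : Fin 3, ζ ^ (2 * (i : ℕ)) * concurrentLines ζ s t i := by
    simp only [Fin.sum_univ_three, concurrentLines, Fin.val_zero, Fin.val_one, Fin.val_two]
    linear_combination -(s * (ζ ^ 3 + 2) + t * (ζ + ζ ^ 2 * (ζ ^ 3 + 1))) * hζ.pow_eq_one -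
      t * one_add_add_sq_eq_zero hζ
  have ht : 3 * t = ∑ i : Fin 3, ζ ^ (i : ℕ) * concurrentLines ζ s t i := by
    simp only [Fin.sum_univ_three, concurrentLines, Fin.val_zero, Fin.val_one, Fin.val_two]
    linear_combination -(s * ζ + t * (ζ ^ 3 + 2)) * hζ.pow_eq_one - s * one_add_add_sq_eq_zero hζ
  have h3 : (3 : K) ≠ 0 := mod_cast hζ.neZero'.out
  refine ⟨?_, ?_⟩
  · rw [← mul_div_cancel_left₀ s h3, hs]
    exact div_mem (sum_mem fun i _ ↦ mul_mem (pow_mem hζG _) (h i)) (ofNat_mem G 3)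
  · rw [← mul_div_cancel_left₀ t h3, ht]
    exact div_mem (sum_mem fun i _ ↦ mul_mem (pow_mem hζG _) (h i)) (ofNat_mem G 3)

end ConcurrentLines

section GenericPoint

open IntermediateField

theorem isPrimitiveRoot_ω : IsPrimitiveRoot ω 3 := by
  simpa [ω] using Complex.isPrimitiveRoot_exp 3 (by decide)

theorem exists_lagrange_sum_ne_zero {k : Type*} [Field k] {a b c ζ : k} (hζ : ζ ≠ 0)
    (h : ¬(a = b ∧ b = c)) :
    ∃ x, (b - x) * (c - x) + ζ * (a - x) * (c - x) + ζ ^ 2 * (a - x) * (b - x) ≠ 0 := by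
  by_contra! hquad
  have ha : (b - a) * (c - a) = 0 := by simpa using hquad a
  have hb : (a - b) * (c - b) = 0 := by simpa [hζ] using hquad b
  have hc : (a - c) * (b - c) = 0 := by simpa [hζ] using hquad c
  grind

variable {K : Type*} [Field K] [Algebra ℂ K] {v : Fin 5 → K} {a b c : ℂ}

theorem aeval_pW₀5 (v : Fin 5 → K) (a b c : ℂ) : aeval v (pW₀5 a b c) =
    v 1 ^ 3 + v 2 ^ 3 + v 0 * (v 0 - 1) * (v 0 - algebraMap ℂ K a) * (v 0 - algebraMap ℂ K b) *
      (v 0 - algebraMap ℂ K c) := by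
  simp [pW₀5, q5]

theorem aeval_pF₀5 (v : Fin 5 → K) : aeval v pF₀5 = 1 + v 3 ^ 3 + v 4 ^ 3 := by
  simp [pF₀5]

theorem exists_eval_eq_zero_of_mem_span {p : MvPolynomial (Fin 5) ℂ}
    (hp : p ∈ Ideal.span {pW₀5 a b c, pF₀5}) (x y₁ z₁ : ℂ) :
    ∃ y₂ z₂, y₁ ^ 3 + y₂ ^ 3 + x * (x - 1) * (x - a) * (x - b) * (x - c) = 0 ∧
      1 + z₁ ^ 3 + z₂ ^ 3 = 0 ∧ aeval ![x, y₁, y₂, z₁, z₂] p = 0 := by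
  obtain ⟨y₂, hy₂⟩ := IsAlgClosed.exists_pow_nat_eq
    (-(y₁ ^ 3 + x * (x - 1) * (x - a) * (x - b) * (x - c))) (n := 3) (by decide)
  obtain ⟨z₂, hz₂⟩ := IsAlgClosed.exists_pow_nat_eq (-(1 + z₁ ^ 3)) (n := 3) (by decide)
  have hW : y₁ ^ 3 + y₂ ^ 3 + x * (x - 1) * (x - a) * (x - b) * (x - c) = 0 := by
    rw [hy₂]
    ring
  have hF : 1 + z₁ ^ 3 + z₂ ^ 3 = 0 := by
    rw [hz₂]
    ring
  have hle : Ideal.span {pW₀5 a b c, pF₀5} ≤ RingHom.ker (aeval ![x, y₁, y₂, z₁, z₂]) :=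
    Ideal.span_le.2 <| Set.pair_subset ((aeval_pW₀5 _ a b c).trans hW) ((aeval_pF₀5 _).trans hF)
  exact ⟨y₂, z₂, hW, hF, hle hp⟩

theorem algebraicIndependent_of_ker_aeval_le
    (hv : RingHom.ker (aeval v : MvPolynomial (Fin 5) ℂ →ₐ[ℂ] K) ≤ .span {pW₀5 a b c, pF₀5}) :
    AlgebraicIndependent ℂ (v ∘ ![0, 1, 3]) := by
  refine algebraicIndependent_iff.2 fun p hp ↦ MvPolynomial.funext fun w ↦ ?_
  rw [← aeval_rename] at hp
  obtain ⟨y₂, z₂, -, -, hpoint⟩ := exists_eval_eq_zero_of_mem_span (hv hp) (w 0) (w 1) (w 2)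
  have hw : ![w 0, w 1, y₂, w 2, z₂] ∘ ![0, 1, 3] = w := by
    ext i; fin_cases i <;> rfl
  rwa [aeval_rename, hw, ← map_zero (eval w)] at hpoint

theorem apply_zero_ne_algebraMap_of_ker_aeval_le
    (hv : RingHom.ker (aeval v : MvPolynomial (Fin 5) ℂ →ₐ[ℂ] K) ≤ .span {pW₀5 a b c, pF₀5})
    (r : ℂ) : v 0 ≠ algebraMap ℂ K r := by
  intro h
  have hp : aeval v (X 0 - C r) = 0 := by simp [h]
  obtain ⟨y₂, z₂, -, -, hpoint⟩ := exists_eval_eq_zero_of_mem_span (hv hp) (r + 1) 0 0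
  simp at hpoint

theorem apply_three_ne_zero_of_ker_aeval_le
    (hv : RingHom.ker (aeval v : MvPolynomial (Fin 5) ℂ →ₐ[ℂ] K) ≤ .span {pW₀5 a b c, pF₀5}) :
    v 3 ≠ 0 := by
  intro h
  have hp : aeval v (X 3 : MvPolynomial (Fin 5) ℂ) = 0 := by simpa using h
  obtain ⟨y₂, z₂, -, -, hpoint⟩ := exists_eval_eq_zero_of_mem_span (hv hp) 0 0 1
  simp at hpoint

theorem concurrentLines_zero_add_mul_concurrentLines_one_ne_zero
    (hv : RingHom.ker (aeval v : MvPolynomial (Fin 5) ℂ →ₐ[ℂ] K) ≤ .span {pW₀5 a b c, pF₀5}) :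
    concurrentLines (algebraMap ℂ K ω) (v 1) (v 2) 0 +
      v 0 * concurrentLines (algebraMap ℂ K ω) (v 1) (v 2) 1 ≠ 0 := by
  intro h
  have hp : aeval v (X 1 + X 2 + X 0 * (C ω * X 1 + C ω ^ 2 * X 2)) = 0 := by
    simpa [concurrentLines] using h
  have hcube (y₁ : ℂ) : y₁ ^ 3 =
      -(-ω ^ 2 * (-ω ^ 2 - 1) * (-ω ^ 2 - a) * (-ω ^ 2 - b) * (-ω ^ 2 - c)) := by
    obtain ⟨y₂, z₂, hy, -, hpoint⟩ := exists_eval_eq_zero_of_mem_span (hv hp) (-ω ^ 2) y₁ 0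
    replace hpoint : y₁ + y₂ + -ω ^ 2 * (ω * y₁ + ω ^ 2 * y₂) = 0 := by simpa using hpoint
    have hy₂ : y₂ = 0 := by
      refine (mul_eq_zero.1 (?_ : (1 - ω) * y₂ = 0)).resolve_left
        (sub_ne_zero.2 (isPrimitiveRoot_ω.ne_one (by decide)).symm)
      linear_combination hpoint + (y₁ + ω * y₂) * isPrimitiveRoot_ω.pow_eq_one
    rw [hy₂] at hy
    linear_combination hy
  simpa using (hcube 0).trans (hcube 1).symm

theorem sum_concurrentLines_div_ne_zero
    (hv : RingHom.ker (aeval v : MvPolynomial (Fin 5) ℂ →ₐ[ℂ] K) ≤ .span {pW₀5 a b c, pF₀5})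
    (h : ¬(a = b ∧ b = c)) :
    ∑ i, concurrentLines (algebraMap ℂ K ω) (v 3) (v 4) i /
      ((algebraMap ℂ K ∘ ![a, b, c]) i - v 0) ≠ 0 := by
  intro hsum
  have hne (r : ℂ) : algebraMap ℂ K r - v 0 ≠ 0 :=
    sub_ne_zero.2 (apply_zero_ne_algebraMap_of_ker_aeval_le hv r).symm
  have hp : aeval v ((X 3 + X 4) * (C b - X 0) * (C c - X 0) +
      (C ω * X 3 + C ω ^ 2 * X 4) * (C a - X 0) * (C c - X 0) +
      (C ω ^ 2 * X 3 + C ω ^ 4 * X 4) * (C a - X 0) * (C b - X 0)) = 0 := by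
    have ha := hne a
    have hb := hne b
    have hc := hne c
    simp only [Fin.sum_univ_three, concurrentLines, Function.comp_apply, Matrix.cons_val,
      Fin.val_zero, Fin.val_one, Fin.val_two] at hsum
    simp only [map_add, map_mul, map_sub, map_pow, aeval_X, algHom_C]
    field_simp at hsum
    linear_combination hsum
  obtain ⟨x, hx⟩ := exists_lagrange_sum_ne_zero (isPrimitiveRoot_ω.ne_zero (by decide)) h
  obtain ⟨y₂, z₂, -, hz, hpoint⟩ := exists_eval_eq_zero_of_mem_span (hv hp) x 0 (-1)
  have hz₂ : z₂ = 0 := by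
    refine pow_eq_zero_iff (n := 3) three_ne_zero |>.1 ?_
    linear_combination hz
  replace hpoint : (-1) * (b - x) * (c - x) + ω * (-1) * (a - x) * (c - x) +
      ω ^ 2 * (-1) * (a - x) * (b - x) = 0 := by
    simpa [hz₂] using hpoint
  exact hx (by linear_combination -hpoint)

theorem isPencilPoint_of_ker_aeval
    (hv : RingHom.ker (aeval v : MvPolynomial (Fin 5) ℂ →ₐ[ℂ] K) = .span {pW₀5 a b c, pF₀5})
    (h : ¬(a = b ∧ b = c)) :
    IsPencilPoint (algebraMap ℂ K ∘ ![a, b, c]) (v 0)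
      (concurrentLines (algebraMap ℂ K ω) (v 1) (v 2))
      (concurrentLines (algebraMap ℂ K ω) (v 3) (v 4)) := by
  have hζ := isPrimitiveRoot_ω.map_of_injective (algebraMap ℂ K).injective
  have hW : aeval v (pW₀5 a b c) = 0 := by
    rw [← RingHom.mem_ker, hv]
    exact Ideal.subset_span <| Set.mem_insert _ _
  have hF : aeval v pF₀5 = 0 := by
    rw [← RingHom.mem_ker, hv]
    exact Ideal.subset_span <| Set.mem_insert_of_mem _ rfl
  rw [aeval_pW₀5] at hW
  rw [aeval_pF₀5] at hF
  exact {
    sum_P := sum_concurrentLines hζ _ _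
    prod_P := by
      have hroots : ∏ i, (v 0 - (algebraMap ℂ K ∘ ![a, b, c]) i) =
        (v 0 - algebraMap ℂ K a) * (v 0 - algebraMap ℂ K b) * (v 0 - algebraMap ℂ K c) :=
        Fin.prod_univ_three _
      rw [prod_concurrentLines hζ, hroots]
      linear_combination hW
    sum_Q := sum_concurrentLines hζ _ _
    prod_Q := by
      rw [prod_concurrentLines hζ]
      linear_combination hF
    ne_zero := map_zero (algebraMap ℂ K) ▸ apply_zero_ne_algebraMap_of_ker_aeval_le hv.le 0
    ne_one := map_one (algebraMap ℂ K) ▸ apply_zero_ne_algebraMap_of_ker_aeval_le hv.le 1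
    ne_root i := apply_zero_ne_algebraMap_of_ker_aeval_le hv.le _
    P_zero_add_mul_P_one_ne_zero := concurrentLines_zero_add_mul_concurrentLines_one_ne_zero hv.le
    sum_Q_div_ne_zero := sum_concurrentLines_div_ne_zero hv.le h }

theorem adjoin_concurrentLines_eq_top (hv : adjoin ℂ (Set.range v) = ⊤) :
    adjoin ℂ ({v 0} ∪ (Set.range (concurrentLines (algebraMap ℂ K ω) (v 1) (v 2)) ∪
      Set.range (concurrentLines (algebraMap ℂ K ω) (v 3) (v 4)))) = ⊤ := by
  set T := {v 0} ∪ (Set.range (concurrentLines (algebraMap ℂ K ω) (v 1) (v 2)) ∪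
    Set.range (concurrentLines (algebraMap ℂ K ω) (v 3) (v 4)))
  have hT : T ⊆ adjoin ℂ T := subset_adjoin ℂ T
  have hζ := isPrimitiveRoot_ω.map_of_injective (algebraMap ℂ K).injective
  have hω : algebraMap ℂ K ω ∈ adjoin ℂ T := (adjoin ℂ T).algebraMap_mem ω
  obtain ⟨hy₁, hy₂⟩ := mem_of_concurrentLines_mem hζ hω (s := v 1) (t := v 2)
    fun i ↦ hT (.inr (.inl ⟨i, rfl⟩))
  obtain ⟨hz₁, hz₂⟩ := mem_of_concurrentLines_mem hζ hω (s := v 3) (t := v 4)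
    fun i ↦ hT (.inr (.inr ⟨i, rfl⟩))
  rw [eq_top_iff, ← hv, adjoin_le_iff, Set.range_subset_iff]
  intro i
  fin_cases i
  exacts [hT (.inl rfl), hy₁, hy₂, hz₁, hz₂]

end GenericPoint

section GroupAction

/-- The weights `1, ω, ω, ω², ω²` of the coordinates `x, y₁, y₂, z₁, z₂` under the diagonal action
of `ℤ/3ℤ` on `W₀ × F₀`. -/
def diagonalWeight : Fin 5 → ℂˣ :=
  let ζ := Units.mk0 ω (isPrimitiveRoot_ω.ne_zero (by decide))
  ![1, ζ, ζ, ζ ^ 2, ζ ^ 2]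

theorem coe_diagonalWeight : (fun i ↦ (diagonalWeight i : ℂ)) = ![1, ω, ω, ω ^ 2, ω ^ 2] := by
  ext i
  fin_cases i <;> simp [diagonalWeight]

theorem diagonalWeight_pow_three (i : Fin 5) : (diagonalWeight i : ℂ) ^ 3 = 1 := by
  rw [congrFun coe_diagonalWeight i]
  have hω := isPrimitiveRoot_ω.pow_eq_one
  fin_cases i <;> simp [← pow_mul, pow_mul' ω 2 3, hω]

theorem diagonalWeight_three_ne_one : (diagonalWeight 3 : ℂ) ≠ 1 := by
  rw [congrFun coe_diagonalWeight 3]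
  exact isPrimitiveRoot_ω.pow_ne_one_of_pos_of_lt two_ne_zero (by decide)

theorem map_scaleVars_diagonalWeight (a b c : ℂ) :
    (Ideal.span {pW₀5 a b c, pF₀5}).map (scaleVars diagonalWeight) =
      Ideal.span {pW₀5 a b c, pF₀5} := by
  have hX (i : Fin 5) : scaleVars diagonalWeight (X i) ^ 3 = X i ^ 3 := by
    rw [scaleVars_X, Units.smul_def, smul_pow, diagonalWeight_pow_three, one_smul]
  have hX₀ : scaleVars diagonalWeight (X 0) = X 0 := by
    rw [scaleVars_X, Units.smul_def, congrFun coe_diagonalWeight 0]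
    exact one_smul ℂ (X 0)
  have hC (r : ℂ) : scaleVars diagonalWeight (C r) = C r := (scaleVars diagonalWeight).commutes r
  have hW : scaleVars diagonalWeight (pW₀5 a b c) = pW₀5 a b c := by
    simp [pW₀5, q5, hX, hX₀, hC]
  have hF : scaleVars diagonalWeight pF₀5 = pF₀5 := by
    simp [pF₀5, hX]
  rw [Ideal.map_span, Set.image_pair, hW, hF]

theorem comp_concurrentLines_eq_smul {K : Type*} [Field K] [Algebra ℂ K] {σ : K ≃ₐ[ℂ] K} {s t : K}
    {w ζ : ℂ} (hs : σ s = w • s) (ht : σ t = w • t) :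
    σ ∘ concurrentLines (algebraMap ℂ K ζ) s t =
      algebraMap ℂ K w • concurrentLines (algebraMap ℂ K ζ) s t := by
  rw [smul_concurrentLines, ← Algebra.smul_def, ← Algebra.smul_def, ← hs, ← ht]
  simpa using map_comp_concurrentLines (σ : K →+* K) (algebraMap ℂ K ζ) s t

theorem aeval_branchPoly {K : Type*} [Field K] [Algebra ℂ K] (a b c : ℂ) (u : Fin 3 → K) :
    aeval u (branchPoly a b c) =
      (∏ i, u i) * (1 + ∑ i, u i) * (1 + ∑ i, (algebraMap ℂ K ∘ ![a, b, c]) i * u i) := by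
  simp [branchPoly, Fin.prod_univ_three, Fin.sum_univ_three, add_assoc]

open IntermediateField in
theorem nonempty_fixedField_algEquiv_of_ker_aeval {K : Type*} [Field K] [Algebra ℂ K]
    {v : Fin 5 → K} {a b c : ℂ} (h : ¬(a = b ∧ b = c))
    (hv : RingHom.ker (aeval v : MvPolynomial (Fin 5) ℂ →ₐ[ℂ] K) = .span {pW₀5 a b c, pF₀5})
    (hgen : adjoin ℂ (Set.range v) = ⊤) {σ : K ≃ₐ[ℂ] K}
    (hσ : ∀ i, σ (v i) = (diagonalWeight i : ℂ) • v i) (horder : 3 ≤ orderOf σ) :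
    Nonempty (fixedField (Subgroup.zpowers σ) ≃ₐ[ℂ] FractionRing (HSurf (pX₁ a b c))) := by
  have hω := isPrimitiveRoot_ω.ne_zero (by decide)
  have hpoint := isPencilPoint_of_ker_aeval hv h
  have hgen' := adjoin_concurrentLines_eq_top hgen
  simp only [fun i ↦ congrFun coe_diagonalWeight i] at hσ
  have hinv : algebraMap ℂ K (ω ^ 2) = (algebraMap ℂ K ω)⁻¹ := by
    rw [← map_inv₀, eq_inv_of_mul_eq_one_left ((pow_succ ω 2).symm.trans
      isPrimitiveRoot_ω.pow_eq_one)]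
  have hfixed := hpoint.fixedField_zpowers_eq_adjoin hgen' horder ((hσ 0).trans (one_smul ℂ _))
    ((map_ne_zero (algebraMap ℂ K)).2 hω) (comp_concurrentLines_eq_smul (hσ 1) (hσ 2))
    (hinv ▸ comp_concurrentLines_eq_smul (hσ 3) (hσ 4))
  have hu := hpoint.algebraicIndependent_baseCoord hgen'
    (algebraicIndependent_of_ker_aeval_le hv.le)
  have hker := ker_aeval_snoc_eq_span three_ne_zero hu (pX₁_eq a b c ▸ prime_pX₁ a b c)
    (hpoint.coverCoord_pow_three.trans (aeval_branchPoly a b c _).symm)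
  rw [hfixed, pX₁_eq]
  exact (nonempty_fractionRing_quotient_algEquiv_adjoin hker).map AlgEquiv.symm

end GroupAction

theorem stmt9_general (a b c : ℂ) (h : ¬(a = b ∧ b = c)) :
    ∃ σ : FractionRing (HSurf2 (pW₀5 a b c) pF₀5) ≃ₐ[ℂ] FractionRing (HSurf2 (pW₀5 a b c) pF₀5),
      orderOf σ = 3 ∧
      σ (cls2 (pW₀5 a b c) pF₀5 (X 1)) = (ω : ℂ) • cls2 (pW₀5 a b c) pF₀5 (X 1) ∧
      σ (cls2 (pW₀5 a b c) pF₀5 (X 2)) = (ω : ℂ) • cls2 (pW₀5 a b c) pF₀5 (X 2) ∧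
      σ (cls2 (pW₀5 a b c) pF₀5 (X 3)) = (ω ^ 2 : ℂ) • cls2 (pW₀5 a b c) pF₀5 (X 3) ∧
      σ (cls2 (pW₀5 a b c) pF₀5 (X 4)) = (ω ^ 2 : ℂ) • cls2 (pW₀5 a b c) pF₀5 (X 4) ∧
      σ (cls2 (pW₀5 a b c) pF₀5 (X 0)) = cls2 (pW₀5 a b c) pF₀5 (X 0) ∧
      Nonempty
        ((AlgHom.equalizer σ.toAlgHom (AlgHom.id ℂ (FractionRing (HSurf2 (pW₀5 a b c) pF₀5))))
          ≃ₐ[ℂ] FractionRing (HSurf (pX₁ a b c))) := by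
  let I := Ideal.span {pW₀5 a b c, pF₀5}
  obtain ⟨σ, hσ⟩ := exists_algEquiv_coordFun_eq_smul (map_scaleVars_diagonalWeight a b c)
  have : Fact (Nat.Prime 3) := ⟨Nat.prime_three⟩
  have horder : orderOf σ = 3 :=
    orderOf_eq_prime_of_eigenvectors adjoin_range_coordFun hσ diagonalWeight_pow_three (i := 3)
      diagonalWeight_three_ne_one (apply_three_ne_zero_of_ker_aeval_le (ker_aeval_coordFun I).le)
  obtain ⟨e⟩ := nonempty_fixedField_algEquiv_of_ker_aeval h (ker_aeval_coordFun I)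
    adjoin_range_coordFun hσ horder.ge
  simp only [fun i ↦ congrFun coe_diagonalWeight i] at hσ
  refine ⟨σ, horder, hσ 1, hσ 2, hσ 3, hσ 4, (hσ 0).trans (one_smul ℂ _), ?_⟩
  rw [← fixedField_zpowers_eq_equalizer]
  exact ⟨e⟩

/-- Let `a, b, c ∈ ℂ ∖ {0,1}` be pairwise distinct, let
`K = Frac(ℂ[x,y₁,y₂,z₁,z₂]/(y₁³ + y₂³ + x(x−1)(x−a)(x−b)(x−c), 1 + z₁³ + z₂³))` be the
function field of `W₀ × F₀`, and let `σ` be the order-3 automorphism of `K` determined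
by `σ(y₁) = ω·y₁`, `σ(y₂) = ω·y₂`, `σ(z₁) = ω²·z₁`, `σ(z₂) = ω²·z₂` (fixing `x`) — the
diagonal `G = ℤ/3ℤ` action.  Then the fixed field `K^σ` is isomorphic as a `ℂ`-algebra
to the function field of the cyclic triple cover `X` of `ℙ³` branched along the stated
six hyperplanes: Rohde's singular Calabi–Yau threefold `X' = (W × F)/G` is birationally
equivalent to `X`. -/
theorem stmt9 (a b c : ℂ) (ha0 : a ≠ 0) (ha1 : a ≠ 1) (hb0 : b ≠ 0) (hb1 : b ≠ 1)
    (hc0 : c ≠ 0) (hc1 : c ≠ 1) (hab : a ≠ b) (hac : a ≠ c) (hbc : b ≠ c) :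
    ∃ σ : FractionRing (HSurf2 (pW₀5 a b c) pF₀5) ≃ₐ[ℂ] FractionRing (HSurf2 (pW₀5 a b c) pF₀5),
      orderOf σ = 3 ∧
      σ (cls2 (pW₀5 a b c) pF₀5 (X 1)) = (ω : ℂ) • cls2 (pW₀5 a b c) pF₀5 (X 1) ∧
      σ (cls2 (pW₀5 a b c) pF₀5 (X 2)) = (ω : ℂ) • cls2 (pW₀5 a b c) pF₀5 (X 2) ∧
      σ (cls2 (pW₀5 a b c) pF₀5 (X 3)) = (ω ^ 2 : ℂ) • cls2 (pW₀5 a b c) pF₀5 (X 3) ∧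
      σ (cls2 (pW₀5 a b c) pF₀5 (X 4)) = (ω ^ 2 : ℂ) • cls2 (pW₀5 a b c) pF₀5 (X 4) ∧
      σ (cls2 (pW₀5 a b c) pF₀5 (X 0)) = cls2 (pW₀5 a b c) pF₀5 (X 0) ∧
      Nonempty
        ((AlgHom.equalizer σ.toAlgHom (AlgHom.id ℂ (FractionRing (HSurf2 (pW₀5 a b c) pF₀5))))
          ≃ₐ[ℂ] FractionRing (HSurf (pX₁ a b c))) :=
  stmt9_general a b c fun h ↦ hab h.1
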